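/- arXiv:1508.05442 — 2 statements merged into one kernel-verified Lean document; each statement's English description precedes it below -/
import Mathlib

section
/- Let k ∈ ℕ and let P be a polynomial with real coefficients of degree at most k. Then for all bounded self-adjoint operators A, B on H, Im P(A + iB) = Σ_{m=1}^{⌊(k+1)/2⌋} ((−1)^{m−1} / (2m−1)!) · D^{2m−1}P(A;B), where D^{m}P(A;B) denotes the m-th derivative at t = 0 of the map t ↦ P(A + tB) from ℝ to B(H), and P is evaluated on operators via the canonical algebra homomorphism from real polynomials to B(H). -/
open ContinuousLinearMap MeasureTheory

variable {H : Type*} [NormedAddCommGroup H] [InnerProductSpace ℂ H] [CompleteSpace H]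

/-- The imaginary part `(Y - Y*)/(2i)` of a bounded operator. -/
noncomputable def opIm (Y : H →L[ℂ] H) : H →L[ℂ] H := (2 * Complex.I)⁻¹ • (Y - star Y)

/-- Evaluation of a real polynomial on a bounded operator, via the canonical algebra
homomorphism (coefficients are mapped into `ℂ`). -/
noncomputable def polyEval (P : Polynomial ℝ) (Y : H →L[ℂ] H) : H →L[ℂ] H :=
  Polynomial.aeval Y (P.map Complex.ofRealHom)

/-!
For fixed `a` and `b`, the map `z ↦ P(a + z b)` is a polynomial in the central variable `z` with
coefficients `c_j` in the algebra, and `c_j` is the Taylor coefficient `D^j P(a; b) / j!`. If `a`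
and `b` are self-adjoint, then `P(a + i b)* = P(a - i b)` because `P` is real, so
`2i Im P(a + i b)` is the difference of the values at `z = i` and `z = -i`. The even powers of `z`
cancel in this difference and the odd ones contribute `2 i^(2m+1) c_(2m+1) = 2i (-1)^m c_(2m+1)`.
-/

open Polynomial ComplexStarModule
open scoped Nat

section LinePoly

variable {R A : Type*} [CommSemiring R] [Semiring A] [Algebra R A]

/-- The polynomial `P(a + b X)` in the central variable `X`: its coefficients are the coefficients
of the expansion of `P(a + z b)` in powers of a central element `z`. -/
noncomputable def linePoly (P : R[X]) (a b : A) : A[X] :=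
  aeval (C b * X + C a) P

theorem natDegree_linePoly_le (P : R[X]) (a b : A) : (linePoly P a b).natDegree ≤ P.natDegree := by
  have linePoly_eq_comp : linePoly P a b = (P.map (algebraMap R A)).comp (C b * X + C a) := by
    rw [linePoly, aeval_def, Polynomial.comp, eval₂_map]
    rfl
  calc (linePoly P a b).natDegree
    _ ≤ (P.map (algebraMap R A)).natDegree * (C b * X + C a).natDegree :=
      linePoly_eq_comp ▸ natDegree_comp_le
    _ ≤ P.natDegree * 1 := Nat.mul_le_mul natDegree_map_le natDegree_linear_le
    _ = P.natDegree := mul_one _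

theorem eval_linePoly (P : R[X]) (a b : A) {z : A} (hz : ∀ x, Commute x z) :
    (linePoly P a b).eval z = aeval (a + b * z) P := by
  let evalAtCentral : A[X] →ₐ[R] A := eval₂AlgHom (AlgHom.id R A) z hz
  have evalAtCentral_apply (q : A[X]) : evalAtCentral q = q.eval z := rfl
  calc (linePoly P a b).eval z
    _ = evalAtCentral (aeval (C b * X + C a) P) := (evalAtCentral_apply _).symm
    _ = aeval (evalAtCentral (C b * X + C a)) P := (aeval_algHom_apply _ _ _).symm
    _ = aeval (a + b * z) P := by
      rw [evalAtCentral_apply, eval_add, eval_mul_X, eval_C, eval_C, add_comm]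

theorem eval_algebraMap_linePoly {S : Type*} [CommSemiring S] [Algebra S A] (P : R[X]) (a b : A)
    (s : S) : (linePoly P a b).eval (algebraMap S A s) = aeval (a + s • b) P := by
  rw [eval_linePoly P a b fun x => (Algebra.commutes s x).symm, Algebra.smul_def,
    Algebra.commutes]

end LinePoly

section TaylorCoefficients

variable {𝕜 A : Type*} [NontriviallyNormedField 𝕜] [NormedRing A] [NormedAlgebra 𝕜 A]

theorem hasDerivAt_eval_algebraMap (q : A[X]) (t : 𝕜) :
    HasDerivAt (fun s : 𝕜 => q.eval (algebraMap 𝕜 A s))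
      (q.derivative.eval (algebraMap 𝕜 A t)) t := by
  induction q using Polynomial.induction_on' with
  | add p q hp hq => simpa only [derivative_add, eval_add] using hp.fun_add hq
  | monomial n c =>
    have hpow : HasDerivAt (fun s : 𝕜 => c * algebraMap 𝕜 A (s ^ n))
        (c * algebraMap 𝕜 A (n * t ^ (n - 1))) t :=
      ((algebraMapCLM 𝕜 A).hasFDerivAt.comp_hasDerivAt t (hasDerivAt_pow n t)).const_mul c
    simpa only [derivative_monomial, eval_monomial, map_mul, map_pow, map_natCast, mul_assoc]
      using hpow

theorem iteratedDeriv_eval_algebraMap (q : A[X]) (n : ℕ) :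
    iteratedDeriv n (fun s : 𝕜 => q.eval (algebraMap 𝕜 A s)) =
      fun s : 𝕜 => (derivative^[n] q).eval (algebraMap 𝕜 A s) := by
  induction n with
  | zero => rw [iteratedDeriv_zero, Function.iterate_zero_apply]
  | succ n ih =>
    rw [iteratedDeriv_succ, ih, Function.iterate_succ_apply']
    exact funext fun s => (hasDerivAt_eval_algebraMap _ s).deriv

theorem iteratedDeriv_eval_algebraMap_zero (q : A[X]) (n : ℕ) :
    iteratedDeriv n (fun s : 𝕜 => q.eval (algebraMap 𝕜 A s)) 0 = n ! • q.coeff n := by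
  simp only [iteratedDeriv_eval_algebraMap, map_zero, ← coeff_zero_eq_eval_zero,
    coeff_iterate_derivative, zero_add, Nat.descFactorial_self]

theorem iteratedDeriv_aeval_add_smul_zero {R : Type*} [CommSemiring R] [Algebra R A] (P : R[X])
    (a b : A) (n : ℕ) :
    iteratedDeriv n (fun t : 𝕜 => aeval (a + t • b) P) 0 = n ! • (linePoly P a b).coeff n := by
  simp_rw [← eval_algebraMap_linePoly]
  exact iteratedDeriv_eval_algebraMap_zero _ n

end TaylorCoefficients

theorem sum_range_two_mul_add_one_of_even_eq_zero {M : Type*} [AddCommMonoid M] {f : ℕ → M}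
    (hf : ∀ j, Even j → f j = 0) (n : ℕ) :
    ∑ j ∈ Finset.range (2 * n + 1), f j = ∑ m ∈ Finset.range n, f (2 * m + 1) := by
  induction n with
  | zero => simpa using hf 0 Even.zero
  | succ n ih =>
    rw [show 2 * (n + 1) + 1 = 2 * n + 1 + 1 + 1 by ring, Finset.sum_range_succ,
      Finset.sum_range_succ, ih, hf (2 * n + 1 + 1) ⟨n + 1, by ring⟩, add_zero,
      Finset.sum_range_succ]

theorem eval_sub_eval_neg {A : Type*} [Ring A] {q : A[X]} {n : ℕ} (hq : q.natDegree ≤ 2 * n)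
    (x : A) :
    q.eval x - q.eval (-x) =
      2 • ∑ m ∈ Finset.range n, q.coeff (2 * m + 1) * x ^ (2 * m + 1) := by
  have hlt : q.natDegree < 2 * n + 1 := Nat.lt_succ_of_le hq
  rw [eval_eq_sum_range' hlt, eval_eq_sum_range' hlt, ← Finset.sum_sub_distrib,
    sum_range_two_mul_add_one_of_even_eq_zero, Finset.smul_sum]
  · refine Finset.sum_congr rfl fun m _ => ?_
    rw [Odd.neg_pow (odd_two_mul_add_one m), mul_neg, sub_neg_eq_add, two_nsmul]
  · intro j hj
    rw [hj.neg_pow, sub_self]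

theorem star_aeval {R A : Type*} [CommSemiring R] [StarRing R] [TrivialStar R] [Semiring A]
    [StarRing A] [Algebra R A] [StarModule R A] (P : R[X]) (y : A) :
    star (aeval y P) = aeval (star y) P := by
  simp only [aeval_eq_sum_range, star_sum, star_smul, star_trivial, star_pow]

theorem star_add_I_smul {A : Type*} [AddCommGroup A] [Module ℂ A] [StarAddMonoid A]
    [StarModule ℂ A] {a b : A} (ha : IsSelfAdjoint a) (hb : IsSelfAdjoint b) :
    star (a + Complex.I • b) = a + (-Complex.I) • b := by
  rw [star_add, star_smul, ha.star_eq, hb.star_eq, Complex.star_def, Complex.conj_I]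

theorem imaginaryPart_aeval_add_I_smul {A : Type*} [Ring A] [Algebra ℂ A] [StarRing A]
    [StarModule ℂ A] {P : ℝ[X]} {n : ℕ} (hP : P.natDegree ≤ 2 * n) {a b : A}
    (ha : IsSelfAdjoint a) (hb : IsSelfAdjoint b) :
    (ℑ (aeval (a + Complex.I • b) P) : A) =
      ∑ m ∈ Finset.range n, (-1 : ℝ) ^ m • (linePoly P a b).coeff (2 * m + 1) := by
  have hdeg : (linePoly P a b).natDegree ≤ 2 * n := (natDegree_linePoly_le P a b).trans hP
  have I_pow_odd (m : ℕ) : Complex.I ^ (2 * m + 1) = Complex.I * ((-1 : ℝ) ^ m : ℝ) := by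
    rw [pow_succ', pow_mul, Complex.I_sq]
    push_cast
    rfl
  rw [imaginaryPart_apply_coe, star_aeval, star_add_I_smul ha hb, ← eval_algebraMap_linePoly,
    ← eval_algebraMap_linePoly, map_neg, eval_sub_eval_neg hdeg, two_nsmul,
    ← two_smul ℝ, inv_smul_smul₀ two_ne_zero, Finset.smul_sum]
  refine Finset.sum_congr rfl fun m _ => ?_
  rw [← map_pow, I_pow_odd, ← Algebra.commutes, ← Algebra.smul_def, smul_smul, ← mul_assoc,
    neg_mul, Complex.I_mul_I, neg_neg, one_mul, Complex.coe_smul]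

theorem stmt3_general {A : Type*} [NormedRing A] [NormedAlgebra ℂ A] [StarRing A] [StarModule ℂ A]
    (k : ℕ) (P : ℝ[X]) (hP : P.natDegree ≤ k) (a b : A)
    (ha : IsSelfAdjoint a) (hb : IsSelfAdjoint b) :
    (ℑ (aeval (a + Complex.I • b) P) : A) =
      ∑ m ∈ Finset.Icc 1 ((k + 1) / 2),
        ((-1 : ℝ) ^ (m - 1) / ((2 * m - 1)! : ℝ)) •
          iteratedDeriv (2 * m - 1) (fun t : ℝ => aeval (a + t • b) P) 0 := by
  have hdeg : P.natDegree ≤ 2 * ((k + 1) / 2) := by lia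
  rw [imaginaryPart_aeval_add_I_smul hdeg ha hb, ← Finset.Ico_add_one_right_eq_Icc,
    Finset.sum_Ico_eq_sum_range, Nat.add_sub_cancel]
  refine Finset.sum_congr rfl fun m _ => ?_
  have hfact : ((2 * m + 1)! : ℝ) ≠ 0 := by positivity
  rw [show 2 * (1 + m) - 1 = 2 * m + 1 by lia, Nat.add_sub_cancel_left,
    iteratedDeriv_aeval_add_smul_zero, ← Nat.cast_smul_eq_nsmul ℝ, smul_smul,
    div_mul_cancel₀ _ hfact]

theorem opIm_eq_imaginaryPart (Y : H →L[ℂ] H) : opIm Y = ℑ Y := by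
  rw [opIm, imaginaryPart_apply_coe, mul_inv_rev, Complex.inv_I, mul_smul,
    ← Complex.coe_smul (2⁻¹ : ℝ), Complex.ofReal_inv, Complex.ofReal_ofNat]

theorem polyEval_eq_aeval {E : Type*} [NormedAddCommGroup E] [InnerProductSpace ℂ E] (P : ℝ[X])
    (Y : E →L[ℂ] E) : polyEval P Y = aeval Y P :=
  aeval_map_algebraMap ℂ Y P

/-- For a real polynomial `P` of degree at most `k` and bounded self-adjoint `A, B`,
`Im P(A+iB) = Σ_{m=1}^{⌊(k+1)/2⌋} ((−1)^{m-1}/(2m-1)!) D^{2m-1}P(A;B)`, where `D^m P(A;B)` is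
the `m`-th derivative at `t = 0` of `t ↦ P(A + tB)`. -/
theorem stmt3 [TopologicalSpace.SeparableSpace H] (hinf : ¬ FiniteDimensional ℂ H)
    (k : ℕ) (P : Polynomial ℝ) (hP : P.natDegree ≤ k)
    (A B : H →L[ℂ] H) (hA : IsSelfAdjoint A) (hB : IsSelfAdjoint B) :
    opIm (polyEval P (A + Complex.I • B)) =
      ∑ m ∈ Finset.Icc 1 ((k + 1) / 2),
        ((-1 : ℝ) ^ (m - 1) / (Nat.factorial (2 * m - 1) : ℝ)) •
          iteratedDeriv (2 * m - 1) (fun t : ℝ => polyEval P (A + t • B)) 0 := by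
  simpa only [opIm_eq_imaginaryPart, polyEval_eq_aeval] using stmt3_general k P hP A B hA hB
end

section
/- Let k ∈ ℕ, λ ∈ [−1, 1], let A, B be bounded self-adjoint operators on H with the spectrum of A contained in (−1, 1), and set X := A + iB. Then I − λX is invertible, I − λ(A + tB) is invertible for real t near 0, and, writing D^{2m}g(A;B) for the (2m)-th derivative at t = 0 of the map t ↦ (A + tB)^{2k} (I − λ(A + tB))^{-1}, the following inequalities hold: if k is odd, Re{X^{2k}(I − λX)^{-1}} ≤ Σ_{m=0}^{k−1} ((−1)^m / (2m)!) · D^{2m}g(A;B); if k is even, Re{X^{2k}(I − λX)^{-1}} ≥ Σ_{m=0}^{k−1} ((−1)^m / (2m)!) · D^{2m}g(A;B). -/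
open ContinuousLinearMap MeasureTheory

variable {H : Type*} [NormedAddCommGroup H] [InnerProductSpace ℂ H] [CompleteSpace H]

/-- The real part `(Y + Y*)/2` of a bounded operator. -/
noncomputable def opRe (Y : H →L[ℂ] H) : H →L[ℂ] H := (2 : ℂ)⁻¹ • (Y + star Y)

/-!
Write `M = 1 - λA`, `s = M⁻¹B` and `J(z) = (1 - λ(A + zB))⁻¹`. Iterating the identity
`J(z)(A + zB) = M⁻¹(A + zBJ(z))` shows that `g(A + zB) = (A + zB)²ᵏJ(z)` is a polynomial in `z` of
degree less than `2k` plus the exact remainder `z²ᵏs²ᵏJ(z)`, so this polynomial is the Taylor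
polynomial at `0`. Its coefficients are self-adjoint; at `z = i` the real part therefore keeps only
the even ones, with signs `(-1)ᵐ`. Since `sᵏJ(z) = J(z)(s*)ᵏ`, the remainder at `z = i` is
`(-1)ᵏsᵏJ(i)(s*)ᵏ`, and `Re J(i)⁻¹ = M > 0` makes `J(i)` exist with `Re J(i) ≥ 0`.
-/

open Filter Topology ComplexStarModule

section Resolvent

theorem semiconjBy_ringInverse_symm_left {M : Type*} [MonoidWithZero M] {a x y : M}
    (h : SemiconjBy a x y) : SemiconjBy (Ring.inverse a) y x := by
  by_cases ha : IsUnit a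
  · obtain ⟨u, rfl⟩ := ha
    simpa only [Ring.inverse_unit] using h.units_inv_symm_left
  · rw [Ring.inverse_non_unit a ha, SemiconjBy, zero_mul, mul_zero]

theorem ringInverse_mul_pow_mul_ringInverse_sub {R : Type*} [Ring R] {m b c : R} (hm : IsUnit m)
    (hc : c * Ring.inverse m * b = b * Ring.inverse m * c) (n : ℕ) :
    (Ring.inverse m * b) ^ n * Ring.inverse (m - c) =
      Ring.inverse (m - c) * (b * Ring.inverse m) ^ n := by
  have h : SemiconjBy (m - c) (Ring.inverse m * b) (b * Ring.inverse m) := by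
    rw [SemiconjBy, sub_mul, mul_sub, Ring.mul_inverse_cancel_left _ _ hm,
      Ring.inverse_mul_cancel_right _ _ hm, ← mul_assoc, hc]
  exact ((semiconjBy_ringInverse_symm_left h).pow_right n).eq.symm

variable {𝕜 R : Type*} [CommRing 𝕜] [Ring R] [Algebra 𝕜 R]

theorem commute_ringInverse_one_sub_smul (μ : 𝕜) (x : R) :
    Commute (Ring.inverse (1 - μ • x)) x :=
  semiconjBy_ringInverse_symm_left
    ((Commute.one_left x).sub_left ((Commute.refl x).smul_left μ))

/-- The function `x ↦ xⁿ (1 - μ x)⁻¹`, whose Taylor expansion along `a + z b` the theorem is about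
(for `n = 2k`). By the convention for `Ring.inverse` it vanishes where `1 - μ x` is not
invertible. -/
noncomputable def powMulResolvent (μ : 𝕜) (n : ℕ) (x : R) : R := x ^ n * Ring.inverse (1 - μ • x)

theorem powMulResolvent_succ (μ : 𝕜) (n : ℕ) (x : R) :
    powMulResolvent μ (n + 1) x = powMulResolvent μ n x * x := by
  rw [powMulResolvent, powMulResolvent, pow_succ, mul_assoc, mul_assoc,
    (commute_ringInverse_one_sub_smul μ x).eq]

theorem ringInverse_one_sub_smul_mul_self {μ : 𝕜} {a x : R} (ha : IsUnit (1 - μ • a))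
    (hx : IsUnit (1 - μ • x)) :
    Ring.inverse (1 - μ • x) * x =
      Ring.inverse (1 - μ • a) * (a + (x - a) * Ring.inverse (1 - μ • x)) := by
  have h : (1 - μ • a) * x = a * (1 - μ • x) + (x - a) := by
    simp only [sub_mul, mul_sub, one_mul, mul_one, smul_mul_assoc, mul_smul_comm]
    abel
  rw [(commute_ringInverse_one_sub_smul μ x).eq, eq_comm, Ring.inverse_mul_eq_iff_eq_mul _ _ _ ha,
    ← mul_assoc, h, add_mul, Ring.mul_inverse_cancel_right _ _ hx]

theorem exists_sum_pow_smul_mul_add_smul (a b e : R) (n : ℕ) (c : ℕ → R) :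
    ∃ d : ℕ → R, ∀ z : 𝕜,
      (∑ i ∈ Finset.range n, z ^ i • c i) * (a + z • b) + z ^ n • e =
        ∑ i ∈ Finset.range (n + 1), z ^ i • d i := by
  refine ⟨fun i => (if i < n then c i * a else e) + if i = 0 then 0 else c (i - 1) * b,
    fun z => ?_⟩
  have hleft : ∑ i ∈ Finset.range (n + 1), z ^ i • (if i < n then c i * a else e) =
      (∑ i ∈ Finset.range n, z ^ i • c i) * a + z ^ n • e := by
    rw [Finset.sum_range_succ, if_neg (lt_irrefl n), Finset.sum_mul]
    refine congrArg (· + _) (Finset.sum_congr rfl fun i hi => ?_)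
    rw [if_pos (Finset.mem_range.1 hi), smul_mul_assoc]
  have hright : ∑ i ∈ Finset.range (n + 1), z ^ i • (if i = 0 then 0 else c (i - 1) * b) =
      (∑ i ∈ Finset.range n, z ^ i • c i) * z • b := by
    rw [Finset.sum_range_succ', if_pos rfl, smul_zero, add_zero, Finset.sum_mul]
    refine Finset.sum_congr rfl fun i _ => ?_
    rw [if_neg i.succ_ne_zero, Nat.add_sub_cancel, smul_mul_smul_comm, pow_succ]
  simp only [smul_add, Finset.sum_add_distrib, hleft, hright, mul_add]
  abel

theorem exists_powMulResolvent_add_smul_eq {μ : 𝕜} {a : R} (ha : IsUnit (1 - μ • a)) (b : R)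
    (n : ℕ) :
    ∃ c : ℕ → R, ∀ z : 𝕜, IsUnit (1 - μ • (a + z • b)) →
      powMulResolvent μ n (a + z • b) = ∑ i ∈ Finset.range n, z ^ i • c i +
        z ^ n • ((Ring.inverse (1 - μ • a) * b) ^ n * Ring.inverse (1 - μ • (a + z • b))) := by
  induction n with
  | zero => exact ⟨0, fun z _ => by simp [powMulResolvent]⟩
  | succ n ih =>
    obtain ⟨c, hc⟩ := ih
    set q := Ring.inverse (1 - μ • a)
    obtain ⟨d, hd⟩ := exists_sum_pow_smul_mul_add_smul (𝕜 := 𝕜) a b ((q * b) ^ n * (q * a)) n c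
    refine ⟨d, fun z hz => ?_⟩
    have hstep := ringInverse_one_sub_smul_mul_self ha hz
    rw [add_sub_cancel_left] at hstep
    rw [powMulResolvent_succ, hc z hz, ← hd z, add_mul, smul_mul_assoc, mul_assoc, hstep]
    simp only [mul_add, smul_add, smul_mul_assoc, mul_smul_comm, smul_smul, pow_succ, mul_assoc,
      ← add_assoc, q]

variable [StarRing 𝕜] [StarRing R] [StarModule 𝕜 R]

theorem isSelfAdjoint_one_sub_smul {μ : 𝕜} (hμ : IsSelfAdjoint μ) {a : R}
    (ha : IsSelfAdjoint a) : IsSelfAdjoint (1 - μ • a) :=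
  (IsSelfAdjoint.one R).sub (hμ.smul ha)

theorem isSelfAdjoint_powMulResolvent {μ : 𝕜} (hμ : IsSelfAdjoint μ) (n : ℕ) {a : R}
    (ha : IsSelfAdjoint a) : IsSelfAdjoint (powMulResolvent μ n a) :=
  ((ha.pow n).commute_iff (isSelfAdjoint_one_sub_smul hμ ha).ringInverse).1
    ((commute_ringInverse_one_sub_smul μ a).symm.pow_left n)

theorem ringInverse_mul_pow_two_mul_mul_ringInverse {μ : 𝕜} (hμ : IsSelfAdjoint μ) {a b : R}
    (ha : IsSelfAdjoint a) (hb : IsSelfAdjoint b) (h : IsUnit (1 - μ • a)) (z : 𝕜) (n : ℕ) :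
    (Ring.inverse (1 - μ • a) * b) ^ (2 * n) * Ring.inverse (1 - μ • (a + z • b)) =
      (Ring.inverse (1 - μ • a) * b) ^ n * Ring.inverse (1 - μ • (a + z • b)) *
        star ((Ring.inverse (1 - μ • a) * b) ^ n) := by
  have hsub : 1 - μ • (a + z • b) = 1 - μ • a - (μ * z) • b := by module
  have hstar : star (Ring.inverse (1 - μ • a) * b) = b * Ring.inverse (1 - μ • a) := by
    rw [star_mul, hb.star_eq, (isSelfAdjoint_one_sub_smul hμ ha).ringInverse.star_eq]
  have hcomm : (μ * z) • b * Ring.inverse (1 - μ • a) * b =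
      b * Ring.inverse (1 - μ • a) * (μ * z) • b := by
    simp only [smul_mul_assoc, mul_smul_comm]
  rw [hsub, star_pow, hstar, two_mul, pow_add, mul_assoc, mul_assoc,
    ringInverse_mul_pow_mul_ringInverse_sub h hcomm]

end Resolvent

section Taylor

variable {𝕜 F : Type*} [NontriviallyNormedField 𝕜] [NormedAddCommGroup F] [NormedSpace 𝕜 F]

theorem iteratedDeriv_pow_smul_zero_of_lt {m n : ℕ} (hmn : m < n) {h : 𝕜 → F}
    (hh : ContDiffAt 𝕜 m h 0) : iteratedDeriv m (fun t => t ^ n • h t) 0 = 0 := by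
  rw [← iteratedDerivWithin_univ]
  refine (iteratedDerivWithin_smul (Set.mem_univ _) uniqueDiffOn_univ
    (ContDiffAt.contDiffWithinAt (by fun_prop)) hh.contDiffWithinAt).trans
    (Finset.sum_eq_zero fun i hi => ?_)
  have hin : i ≠ n := by grind
  rw [iteratedDerivWithin_univ, iteratedDeriv_fun_pow_zero, if_neg hin, Nat.cast_zero, zero_smul,
    smul_zero]

theorem iteratedDeriv_sum_pow_smul_zero {m n : ℕ} (hmn : m < n) (c : ℕ → F) :
    iteratedDeriv m (fun t : 𝕜 => ∑ i ∈ Finset.range n, t ^ i • c i) 0 =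
      (m.factorial : 𝕜) • c m := by
  rw [iteratedDeriv_fun_sum fun i _ => by fun_prop]
  have hterm (i : ℕ) : iteratedDeriv m (fun t : 𝕜 => t ^ i • c i) 0 =
      if m = i then (m.factorial : 𝕜) • c m else 0 := by
    rw [iteratedDeriv_smul_const (by fun_prop), iteratedDeriv_fun_pow_zero]
    split_ifs with hmi <;> simp [hmi]
  simp only [hterm, Finset.sum_ite_eq, Finset.mem_range, hmn, if_true]

theorem iteratedDeriv_zero_of_eventuallyEq_sum_pow_smul_add {m n : ℕ} (hmn : m < n) {c : ℕ → F}
    {f h : 𝕜 → F} (hh : ContDiffAt 𝕜 m h 0)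
    (hf : f =ᶠ[𝓝 0] fun t => ∑ i ∈ Finset.range n, t ^ i • c i + t ^ n • h t) :
    iteratedDeriv m f 0 = (m.factorial : 𝕜) • c m := by
  rw [hf.iteratedDeriv_eq]
  refine (iteratedDeriv_add (by fun_prop) (by fun_prop)).trans ?_
  rw [iteratedDeriv_sum_pow_smul_zero hmn, iteratedDeriv_pow_smul_zero_of_lt hmn hh, add_zero]

variable [StarRing 𝕜] [TrivialStar 𝕜] [StarAddMonoid F] [ContinuousStar F] [StarModule 𝕜 F]

theorem iteratedDeriv_star (n : ℕ) (f : 𝕜 → F) :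
    iteratedDeriv n (fun t => star (f t)) = fun t => star (iteratedDeriv n f t) := by
  induction n with
  | zero => simp only [iteratedDeriv_zero]
  | succ n ih => simp only [iteratedDeriv_succ, ih, deriv.star']

theorem isSelfAdjoint_iteratedDeriv {f : 𝕜 → F} (hf : ∀ t, IsSelfAdjoint (f t)) (n : ℕ) (t : 𝕜) :
    IsSelfAdjoint (iteratedDeriv n f t) := by
  have h := congrFun (iteratedDeriv_star n f) t
  simp only [(hf _).star_eq] at h
  exact h.symm

end Taylor

section BanachAlgebra

variable {R : Type*} [NormedRing R] [NormedAlgebra ℂ R] [CompleteSpace R]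

theorem eventually_isUnit_one_sub_smul_add {μ : ℂ} {a : R} (ha : IsUnit (1 - μ • a)) (b : R) :
    ∀ᶠ t : ℝ in 𝓝 0, IsUnit (1 - μ • (a + t • b)) := by
  have hcont : Continuous fun t : ℝ => 1 - μ • (a + t • b) := by fun_prop
  exact hcont.continuousAt.eventually_mem (Units.isOpen.mem_nhds (by simpa using ha))

theorem contDiffAt_ringInverse_one_sub_smul_add {μ : ℂ} {a : R} (ha : IsUnit (1 - μ • a)) (b : R)
    (n : ℕ) : ContDiffAt ℝ n (fun t : ℝ => Ring.inverse (1 - μ • (a + t • b))) 0 := by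
  have hinv : ContDiffAt ℝ n Ring.inverse (1 - μ • (a + (0 : ℝ) • b)) := by
    simpa using contDiffAt_ringInverse ℝ ha.unit
  exact hinv.comp (f := fun t : ℝ => 1 - μ • (a + t • b)) 0 (by fun_prop)

theorem powMulResolvent_taylor {μ : ℂ} {a : R} (ha : IsUnit (1 - μ • a)) (b : R) (n : ℕ) {z : ℂ}
    (hz : IsUnit (1 - μ • (a + z • b))) :
    powMulResolvent μ n (a + z • b) =
      ∑ i ∈ Finset.range n, z ^ i • (i.factorial : ℝ)⁻¹ •
        iteratedDeriv i (fun t : ℝ => powMulResolvent μ n (a + t • b)) 0 +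
      z ^ n • ((Ring.inverse (1 - μ • a) * b) ^ n * Ring.inverse (1 - μ • (a + z • b))) := by
  obtain ⟨c, hc⟩ := exists_powMulResolvent_add_smul_eq ha b n
  have hexp : (fun t : ℝ => powMulResolvent μ n (a + t • b)) =ᶠ[𝓝 0] fun t =>
      ∑ i ∈ Finset.range n, t ^ i • c i +
        t ^ n • ((Ring.inverse (1 - μ • a) * b) ^ n * Ring.inverse (1 - μ • (a + t • b))) := by
    filter_upwards [eventually_isUnit_one_sub_smul_add ha b] with t ht
    simpa only [← Complex.ofReal_pow, Complex.coe_smul] using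
      hc t (by rwa [Complex.coe_smul])
  have hcoeff {i : ℕ} (hi : i < n) : (i.factorial : ℝ)⁻¹ •
      iteratedDeriv i (fun t : ℝ => powMulResolvent μ n (a + t • b)) 0 = c i := by
    rw [iteratedDeriv_zero_of_eventuallyEq_sum_pow_smul_add hi
      (contDiffAt_const.mul (contDiffAt_ringInverse_one_sub_smul_add ha b i)) hexp,
      inv_smul_smul₀ (Nat.cast_ne_zero.2 i.factorial_ne_zero)]
  rw [hc z hz]
  refine congrArg (· + _) (Finset.sum_congr rfl fun i hi => ?_)
  rw [hcoeff (Finset.mem_range.1 hi)]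

end BanachAlgebra

section RealPart

variable {E : Type*} [AddCommGroup E] [Module ℂ E] [StarAddMonoid E] [StarModule ℂ E]

theorem I_pow_two_mul (n : ℕ) : Complex.I ^ (2 * n) = ((-1 : ℝ) ^ n : ℝ) := by
  rw [pow_mul, Complex.I_sq]
  norm_cast

theorem realPart_sum_I_pow_smul {c : ℕ → E} (hc : ∀ n, IsSelfAdjoint (c n)) (k : ℕ) :
    (ℜ (∑ n ∈ Finset.range (2 * k), Complex.I ^ n • c n) : E) =
      ∑ m ∈ Finset.range k, (-1 : ℝ) ^ m • c (2 * m) := by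
  induction k with
  | zero => simp
  | succ k ih =>
    have heven : (ℜ (Complex.I ^ (2 * k) • c (2 * k)) : E) = (-1 : ℝ) ^ k • c (2 * k) := by
      rw [I_pow_two_mul, Complex.coe_smul, map_smul, selfAdjoint.val_smul, (hc _).coe_realPart]
    have hodd : ℜ (Complex.I ^ (2 * k + 1) • c (2 * k + 1)) = 0 := by
      rw [pow_succ', I_pow_two_mul, mul_smul, realPart_I_smul, Complex.coe_smul, map_smul,
        (hc _).imaginaryPart, smul_zero, neg_zero]
    rw [Finset.sum_range_succ _ k, ← ih, mul_add, mul_one, Finset.sum_range_succ,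
      Finset.sum_range_succ, map_add, map_add, hodd, add_zero, AddSubgroup.coe_add, heven]

theorem realPart_star (x : E) : ℜ (star x) = ℜ x := by
  ext
  simp only [realPart_apply_coe, star_star, add_comm]

theorem realPart_conjugate {R : Type*} [Ring R] [StarRing R] [Algebra ℂ R] [StarModule ℂ R]
    (c x : R) : (ℜ (c * x * star c) : R) = c * ℜ x * star c := by
  simp only [realPart_apply_coe, star_mul, star_star, mul_smul_comm, smul_mul_assoc, mul_add,
    add_mul, mul_assoc]

theorem realPart_one_sub_smul_add_I_smul {R : Type*} [Ring R] [StarRing R] [Algebra ℂ R]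
    [StarModule ℂ R] (l : ℝ) {a b : R} (ha : IsSelfAdjoint a) (hb : IsSelfAdjoint b) :
    (ℜ (1 - (l : ℂ) • (a + Complex.I • b)) : R) = 1 - (l : ℂ) • a := by
  simp [realPart_I_smul, hb.imaginaryPart, ha.coe_realPart]

end RealPart

section CStarAlgebra

variable {R : Type*} [CStarAlgebra R]

theorem isUnit_one_add_I_smul {d : R} (hd : IsSelfAdjoint d) : IsUnit (1 + Complex.I • d) := by
  have hI : Complex.I ∉ spectrum ℂ d := fun h => by
    simpa using congrArg Complex.im (hd.mem_spectrum_eq_re h)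
  have hfactor : 1 + Complex.I • d = -Complex.I • (algebraMap ℂ R Complex.I - d) := by
    simp [smul_sub, Algebra.algebraMap_eq_smul_one, smul_smul]
  rw [hfactor]
  exact (spectrum.notMem_iff.1 hI).smul (Units.mk0 (-Complex.I) (neg_ne_zero.2 Complex.I_ne_zero))

variable [PartialOrder R] [StarOrderedRing R]

theorem isUnit_of_isStrictlyPositive_realPart {x : R} (hx : IsStrictlyPositive (ℜ x : R)) :
    IsUnit x := by
  -- `x = p (1 + i d) p` with `p = (Re x)^(1/2)` and `d = p⁻¹ (Im x) p⁻¹` self-adjoint.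
  set p := CFC.sqrt (ℜ x : R)
  set q := Ring.inverse p
  have hp : IsUnit p := hx.isUnit_cfcSqrt
  have hq : IsSelfAdjoint q := (CFC.sqrt_nonneg _).isSelfAdjoint.ringInverse
  have hfactor : x = p * (1 + Complex.I • (q * ℑ x * q)) * p := by
    calc x = p * p + Complex.I • ((p * q) * ℑ x * (q * p)) := by
          rw [CFC.sqrt_mul_sqrt_self _ hx.nonneg, Ring.mul_inverse_cancel _ hp,
            Ring.inverse_mul_cancel _ hp, one_mul, mul_one, realPart_add_I_smul_imaginaryPart]
      _ = p * (1 + Complex.I • (q * ℑ x * q)) * p := by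
          simp only [mul_add, add_mul, mul_one, mul_smul_comm, smul_mul_assoc, mul_assoc]
  rw [hfactor]
  exact (hp.mul (isUnit_one_add_I_smul ((ℑ x).2.conjugate_self hq))).mul hp

theorem realPart_ringInverse_nonneg {x : R} (hx : IsUnit x) (h : 0 ≤ (ℜ x : R)) :
    0 ≤ (ℜ (Ring.inverse x) : R) := by
  have hconj : Ring.inverse x = Ring.inverse x * star x * star (Ring.inverse x) := by
    rw [mul_assoc, ← star_mul, Ring.inverse_mul_cancel _ hx, star_one, mul_one]
  rw [hconj, realPart_conjugate, realPart_star]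
  exact star_right_conjugate_nonneg h _

theorem isStrictlyPositive_one_sub_smul {l : ℝ} (hl : l ∈ Set.Icc (-1 : ℝ) 1) {a : R}
    (ha : IsSelfAdjoint a)
    (hspec : spectrum ℂ a ⊆ (fun x : ℝ => (x : ℂ)) '' Set.Ioo (-1 : ℝ) 1) :
    IsStrictlyPositive (1 - (l : ℂ) • a) := by
  have hcfc : 1 - (l : ℂ) • a = cfc (fun x : ℝ => 1 - l * x) a := by
    rw [cfc_sub .., cfc_const_mul_id .., cfc_const_one .., Complex.coe_smul]
  rw [hcfc, cfc_isStrictlyPositive_iff _ a]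
  intro x hx
  obtain ⟨y, hy, hyx⟩ := hspec (spectrum.algebraMap_mem ℂ hx)
  obtain rfl : y = x := Complex.ofReal_injective hyx
  have hlt : |l * y| < 1 := by
    rw [abs_mul]
    exact mul_lt_one_of_nonneg_of_lt_one_right (abs_le.2 hl) (abs_nonneg y) (abs_lt.2 hy)
  linarith [le_abs_self (l * y)]

variable {l : ℝ} {a b : R}

theorem isUnit_one_sub_smul_add_I_smul (ha : IsSelfAdjoint a) (hb : IsSelfAdjoint b)
    (h : IsStrictlyPositive (1 - (l : ℂ) • a)) : IsUnit (1 - (l : ℂ) • (a + Complex.I • b)) :=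
  isUnit_of_isStrictlyPositive_realPart (by rwa [realPart_one_sub_smul_add_I_smul l ha hb])

theorem exists_nonneg_realPart_powMulResolvent_eq (k : ℕ) (ha : IsSelfAdjoint a)
    (hb : IsSelfAdjoint b) (h : IsStrictlyPositive (1 - (l : ℂ) • a)) :
    ∃ T : R, 0 ≤ T ∧ (ℜ (powMulResolvent (l : ℂ) (2 * k) (a + Complex.I • b)) : R) =
      ∑ m ∈ Finset.range k, ((-1 : ℝ) ^ m / ((2 * m).factorial : ℝ)) •
        iteratedDeriv (2 * m) (fun t : ℝ => powMulResolvent (l : ℂ) (2 * k) (a + t • b)) 0 +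
      (-1 : ℝ) ^ k • T := by
  have hl : IsSelfAdjoint (l : ℂ) := Complex.conj_ofReal l
  have hX := isUnit_one_sub_smul_add_I_smul ha hb h
  set s := Ring.inverse (1 - (l : ℂ) • a) * b
  set J := Ring.inverse (1 - (l : ℂ) • (a + Complex.I • b))
  refine ⟨s ^ k * ℜ J * star (s ^ k), star_right_conjugate_nonneg
    (realPart_ringInverse_nonneg hX ?_) _, ?_⟩
  · rw [realPart_one_sub_smul_add_I_smul l ha hb]
    exact h.nonneg
  have hcoeff (n : ℕ) : IsSelfAdjoint ((n.factorial : ℝ)⁻¹ •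
      iteratedDeriv n (fun t : ℝ => powMulResolvent (l : ℂ) (2 * k) (a + t • b)) 0) :=
    .smul (.all _) (isSelfAdjoint_iteratedDeriv (fun t =>
      isSelfAdjoint_powMulResolvent hl _ (ha.add (.smul (.all t) hb))) n 0)
  rw [powMulResolvent_taylor h.isUnit b (2 * k) hX, map_add, AddSubgroup.coe_add,
    realPart_sum_I_pow_smul hcoeff, ringInverse_mul_pow_two_mul_mul_ringInverse hl ha hb h.isUnit,
    I_pow_two_mul, Complex.coe_smul, map_smul, selfAdjoint.val_smul, realPart_conjugate]
  simp only [smul_smul, div_eq_mul_inv]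
  rfl

theorem stmt6_general (k : ℕ) (ha : IsSelfAdjoint a) (hb : IsSelfAdjoint b)
    (h : IsStrictlyPositive (1 - (l : ℂ) • a)) :
    IsUnit (1 - (l : ℂ) • (a + Complex.I • b)) ∧
    (∀ᶠ t : ℝ in 𝓝 0, IsUnit (1 - (l : ℂ) • (a + t • b))) ∧
    (Odd k →
      (ℜ (powMulResolvent (l : ℂ) (2 * k) (a + Complex.I • b)) : R) ≤
        ∑ m ∈ Finset.range k, ((-1 : ℝ) ^ m / ((2 * m).factorial : ℝ)) •
          iteratedDeriv (2 * m) (fun t : ℝ => powMulResolvent (l : ℂ) (2 * k) (a + t • b)) 0) ∧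
    (Even k →
      ∑ m ∈ Finset.range k, ((-1 : ℝ) ^ m / ((2 * m).factorial : ℝ)) •
          iteratedDeriv (2 * m) (fun t : ℝ => powMulResolvent (l : ℂ) (2 * k) (a + t • b)) 0 ≤
        (ℜ (powMulResolvent (l : ℂ) (2 * k) (a + Complex.I • b)) : R)) := by
  obtain ⟨T, hT, hRe⟩ := exists_nonneg_realPart_powMulResolvent_eq k ha hb h
  refine ⟨isUnit_one_sub_smul_add_I_smul ha hb h, eventually_isUnit_one_sub_smul_add h.isUnit b,
    fun hk => ?_, fun hk => ?_⟩
  · simpa [hRe, hk.neg_one_pow] using hT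
  · simpa [hRe, hk.neg_one_pow] using hT

end CStarAlgebra

theorem opRe_eq_realPart (Y : H →L[ℂ] H) : opRe Y = ℜ Y := by
  rw [opRe, realPart_apply_coe, ← Complex.coe_smul, Complex.ofReal_inv, Complex.ofReal_ofNat]

/-- Lemma 3.3 of the paper: for `k ≥ 1`, `λ ∈ [−1,1]`, self-adjoint `A, B` with
`σ(A) ⊆ (−1,1)` and `X = A + iB`, the operators `I − λX` and `I − λ(A+tB)` (for `t` near `0`)
are invertible and, with `D^{2m}g(A;B)` the `(2m)`-th derivative at `t = 0` of
`t ↦ (A+tB)^{2k} (I − λ(A+tB))⁻¹`, one has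
`Re{X^{2k}(I−λX)⁻¹} ≤ Σ_{m=0}^{k−1} ((−1)^m/(2m)!) D^{2m}g(A;B)` if `k` is odd and the
reverse inequality if `k` is even. -/
theorem stmt6 [TopologicalSpace.SeparableSpace H] (hinf : ¬ FiniteDimensional ℂ H)
    (k : ℕ) (hk : 1 ≤ k) (l : ℝ) (hl : l ∈ Set.Icc (-1 : ℝ) 1)
    (A B X : H →L[ℂ] H) (hA : IsSelfAdjoint A) (hB : IsSelfAdjoint B)
    (hspA : spectrum ℂ A ⊆ (fun x : ℝ => (x : ℂ)) '' Set.Ioo (-1 : ℝ) 1)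
    (hX : X = A + Complex.I • B) :
    IsUnit (1 - (l : ℂ) • X) ∧
    (∃ δ > (0 : ℝ), ∀ t : ℝ, |t| < δ → IsUnit (1 - (l : ℂ) • (A + t • B))) ∧
    (Odd k →
      ((∑ m ∈ Finset.range k,
          ((-1 : ℝ) ^ m / (Nat.factorial (2 * m) : ℝ)) •
            iteratedDeriv (2 * m)
              (fun t : ℝ => (A + t • B) ^ (2 * k) * Ring.inverse (1 - (l : ℂ) • (A + t • B))) 0)
        - opRe (X ^ (2 * k) * Ring.inverse (1 - (l : ℂ) • X))).IsPositive) ∧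
    (Even k →
      (opRe (X ^ (2 * k) * Ring.inverse (1 - (l : ℂ) • X))
        - ∑ m ∈ Finset.range k,
            ((-1 : ℝ) ^ m / (Nat.factorial (2 * m) : ℝ)) •
              iteratedDeriv (2 * m)
                (fun t : ℝ => (A + t • B) ^ (2 * k) * Ring.inverse (1 - (l : ℂ) • (A + t • B)))
                0).IsPositive) := by
  simpa only [hX, opRe_eq_realPart, Metric.eventually_nhds_iff, dist_zero_right, Real.norm_eq_abs,
    ContinuousLinearMap.le_def, powMulResolvent] using
    stmt6_general k hA hB (isStrictlyPositive_one_sub_smul hl hA hspA)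
end
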